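/- arXiv:2211.05856 — 4 statements merged into one kernel-verified Lean document; each statement's English description precedes it below -/
import Mathlib

section
/- Let a < b be real numbers, X a topological space, and p : X → [a,b] a continuous map. Suppose that for every relative path γ and every continuous map h : [0,1] × [0,1] → [a,b] satisfying h(u,0) = p(γ(u)), h(0,t) = a, h(1,t) = b for all u,t, and h(u,1) = ℓ(u) for all u, there exists a continuous map H : [0,1] × [0,1] → X with H(u,0) = γ(u), p(H(u,t)) = h(u,t) for all u,t, and H(0,t) = γ(0), H(1,t) = γ(1) for all t. Then for every relative path γ there exists a section s of p such that γ is homotopic rel endpoints to s ∘ ℓ. -/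
open Set unitInterval

/-- The affine homeomorphism `[0,1] → [a,b]`, `u ↦ a + u (b - a)`. -/
noncomputable def ell (a b : ℝ) (hab : a ≤ b) : I → Set.Icc a b :=
  fun u => ⟨a + (u : ℝ) * (b - a), by
    constructor
    · nlinarith [u.2.1, u.2.2]
    · nlinarith [u.2.1, u.2.2]⟩

/-!
Since `[a,b]` is convex, the straight-line homotopy joins `p ∘ γ` to `ℓ` rel endpoints. Lifting it
deforms `γ` to a path `δ` with `p ∘ δ = ℓ`; as `ℓ` is a homeomorphism, `s = δ ∘ ℓ⁻¹` is a section
of `p` and `δ = s ∘ ℓ`.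
-/

theorem homotopicRel_of_convex {E Y : Type*} [AddCommGroup E] [Module ℝ E] [TopologicalSpace E]
    [IsTopologicalAddGroup E] [ContinuousSMul ℝ E] [TopologicalSpace Y] {C : Set E}
    (hC : Convex ℝ C) {f g : C(Y, C)} {S : Set Y} (hfg : EqOn f g S) : f.HomotopicRel g S := by
  let incl : C(C, E) := ⟨Subtype.val, continuous_subtype_val⟩
  let F := ContinuousMap.Homotopy.affine (incl.comp f) (incl.comp g)
  have F_mem (z : I × Y) : F z ∈ C := hC.lineMap_mem (f z.2).2 (g z.2).2 z.1.2
  exact ⟨{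
    toFun := fun z => ⟨F z, F_mem z⟩
    continuous_toFun := F.continuous.subtype_mk F_mem
    map_zero_left := fun y => Subtype.ext (F.apply_zero y)
    map_one_left := fun y => Subtype.ext (F.apply_one y)
    prop' := fun t y hy => Subtype.ext <| by simp [F, incl, hfg hy] }⟩

theorem exists_section_of_isHomeomorph_comp {X Y B : Type*} [TopologicalSpace X]
    [TopologicalSpace Y] [TopologicalSpace B] {p : X → B} {δ : Y → X} (hδ : Continuous δ)
    (hpδ : IsHomeomorph (p ∘ δ)) :
    ∃ s : B → X, Continuous s ∧ Function.RightInverse s p ∧ ∀ y, s (p (δ y)) = δ y := by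
  let e : Y ≃ₜ B := hpδ.homeomorph
  exact ⟨δ ∘ e.symm, hδ.comp e.symm.continuous, e.apply_symm_apply,
    fun y => congrArg δ (e.symm_apply_apply y)⟩

theorem coe_ell_zero (a b : ℝ) (hab : a ≤ b) : (ell a b hab 0 : ℝ) = a := by
  simp [ell]

theorem coe_ell_one (a b : ℝ) (hab : a ≤ b) : (ell a b hab 1 : ℝ) = b := by
  simp [ell]

theorem isHomeomorph_ell {a b : ℝ} (hab : a < b) : IsHomeomorph (ell a b hab.le) := by
  have ell_eq : ell a b hab.le = (iccHomeoI a b hab).symm := by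
    ext u
    simp only [ell, iccHomeoI_symm_apply_coe]
    ring
  exact ell_eq ▸ (iccHomeoI a b hab).symm.isHomeomorph

/-- If every homotopy (rel the endpoint fibers) of `p ∘ γ` to `ℓ` downstairs lifts to a
homotopy rel endpoints upstairs starting at `γ`, then every relative path `γ` is homotopic
rel endpoints to `s ∘ ℓ` for some section `s` of `p`. -/
theorem stmt0 {X : Type*} [TopologicalSpace X] (a b : ℝ) (hab : a < b)
    (p : X → Set.Icc a b) (hp : Continuous p)
    (hlift : ∀ γ : I → X, Continuous γ →
      ((p (γ 0) : ℝ) = a) → ((p (γ 1) : ℝ) = b) →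
      ∀ h : I × I → Set.Icc a b, Continuous h →
        (∀ u, h (u, 0) = p (γ u)) →
        (∀ t, (h (0, t) : ℝ) = a) →
        (∀ t, (h (1, t) : ℝ) = b) →
        (∀ u, h (u, 1) = ell a b hab.le u) →
        ∃ H : I × I → X, Continuous H ∧
          (∀ u, H (u, 0) = γ u) ∧
          (∀ u t, p (H (u, t)) = h (u, t)) ∧
          (∀ t, H (0, t) = γ 0) ∧ (∀ t, H (1, t) = γ 1)) :
    ∀ γ : I → X, Continuous γ →
      ((p (γ 0) : ℝ) = a) → ((p (γ 1) : ℝ) = b) →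
      ∃ s : Set.Icc a b → X, Continuous s ∧ (∀ c, p (s c) = c) ∧
        ∃ H : I × I → X, Continuous H ∧
          (∀ u, H (u, 0) = γ u) ∧
          (∀ u, H (u, 1) = s (ell a b hab.le u)) ∧
          (∀ t, H (0, t) = γ 0) ∧ (∀ t, H (1, t) = γ 1) := by
  intro γ hγ h0 h1
  let pγ : C(I, Set.Icc a b) := ⟨p ∘ γ, hp.comp hγ⟩
  let ℓ : C(I, Set.Icc a b) := ⟨ell a b hab.le, (isHomeomorph_ell hab).continuous⟩
  have agree : EqOn pγ ℓ {0, 1} := by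
    rintro u (rfl | rfl)
    · exact Subtype.ext (h0.trans (coe_ell_zero a b hab.le).symm)
    · exact Subtype.ext (h1.trans (coe_ell_one a b hab.le).symm)
  obtain ⟨F⟩ := homotopicRel_of_convex (convex_Icc a b) agree
  obtain ⟨H, hH, hH_bot, hpH, hH_left, hH_right⟩ := hlift γ hγ h0 h1
    (fun z => F (z.2, z.1)) (by fun_prop) F.apply_zero
    (fun t => (congrArg Subtype.val (F.eq_fst t (by simp))).trans h0)
    (fun t => (congrArg Subtype.val (F.eq_fst t (by simp))).trans h1) F.apply_one
  have hp_top : p ∘ (fun u => H (u, 1)) = ell a b hab.le :=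
    funext fun u => (hpH u 1).trans (F.apply_one u)
  obtain ⟨s, hs, hps, hs_top⟩ := exists_section_of_isHomeomorph_comp
    (hH.comp (Continuous.prodMk_left 1)) (hp_top ▸ isHomeomorph_ell hab)
  refine ⟨s, hs, hps, H, hH, hH_bot, fun u => ?_, hH_left, hH_right⟩
  rw [← hp_top]
  exact (hs_top u).symm
end

section
/- Let a < b be real numbers, X a topological space, and p : X → [a,b] a continuous map. Let D = {(x,c) ∈ X × [a,b] : c ≤ p(x)} with the subspace topology, and suppose there is a continuous map φ : D → X such that p(φ(x,c)) = c for all (x,c) ∈ D and φ(x, p(x)) = x for all x ∈ X (a continuous downward flow compatible with p). Then any two sections s₀, s₁ of p such that s₀ ∘ ℓ and s₁ ∘ ℓ are homotopic through relative paths are homotopic through sections. -/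
open Set unitInterval

/-! The flow retracts the maps `g : B → X` with `c ≤ p (g c)` onto the sections of `p`, by sending
`g` to `c ↦ φ (g c, c)`. It is therefore enough to connect the two sections through such maps, and
there they have room to move: an upward contraction `κ` of `B` to a top element `m` deforms a
section `s` through `s ∘ κ_t` to the constant map `s m`, and a path over the top joins the two
constants. -/

section Supersection

variable {X B : Type*} [TopologicalSpace X] [TopologicalSpace B]

/-- A supersection of `p` is a map from the base to the total space sending each point of the
base into the fibre over a point at least as large. Supersections are the maps that a downward
flow compatible with `p` can push down to sections. -/
def IsSupersection [LE B] (p : X → B) (g : C(B, X)) : Prop :=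
  ∀ c, c ≤ p (g c)

theorem homotopicWith_leftInverse_of_isSupersection [Preorder B] {p : X → B}
    {φ : {q : X × B // q.2 ≤ p q.1} → X} (hφcont : Continuous φ) (hφp : ∀ q, p (φ q) = q.1.2)
    (hφid : ∀ x, φ ⟨(x, p x), le_rfl⟩ = x) {s₀ s₁ : C(B, X)}
    (hs₀ : Function.LeftInverse p s₀) (hs₁ : Function.LeftInverse p s₁)
    (h : s₀.HomotopicWith s₁ (IsSupersection p)) :
    s₀.HomotopicWith s₁ (fun s ↦ Function.LeftInverse p s) := by
  obtain ⟨H⟩ := h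
  have flow_eq (x : X) (c : B) (hc : c ≤ p x) (hx : p x = c) : φ ⟨(x, c), hc⟩ = x := by
    subst hx
    exact hφid x
  exact ⟨{
    toFun q := φ ⟨(H q, q.2), H.prop q.1 q.2⟩
    continuous_toFun := by fun_prop
    map_zero_left c := by simpa using flow_eq (s₀ c) c (hs₀ c).ge (hs₀ c)
    map_one_left c := by simpa using flow_eq (s₁ c) c (hs₁ c).ge (hs₁ c)
    prop' _ _ := hφp _ }⟩

theorem IsSupersection.homotopicWith_const [Preorder B] {p : X → B} {m : B}
    (κ : (ContinuousMap.id B).Homotopy (.const B m)) (hκ : ∀ t c, c ≤ κ (t, c))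
    {g : C(B, X)} (hg : IsSupersection p g) :
    g.HomotopicWith (.const B (g m)) (IsSupersection p) :=
  ⟨{  toFun q := g (κ q)
      map_zero_left _ := by simp
      map_one_left _ := by simp
      prop' t c := (hκ t c).trans (hg (κ (t, c))) }⟩

theorem homotopicWith_const_of_joinedIn_isTop [LE B] {p : X → B} {x y : X}
    (h : JoinedIn {x | IsTop (p x)} x y) :
    (ContinuousMap.const B x).HomotopicWith (.const B y) (IsSupersection p) := by
  obtain ⟨γ, hγ⟩ := h
  exact ⟨{ toHomotopy := γ.toHomotopyConst, prop' := hγ }⟩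

theorem stmt4_general [Preorder B] {m : B}
    (κ : (ContinuousMap.id B).Homotopy (.const B m)) (hκ : ∀ t c, c ≤ κ (t, c))
    {p : X → B} {φ : {q : X × B // q.2 ≤ p q.1} → X} (hφcont : Continuous φ)
    (hφp : ∀ q, p (φ q) = q.1.2) (hφid : ∀ x, φ ⟨(x, p x), le_rfl⟩ = x)
    {s₀ s₁ : B → X} (hs₀ : Continuous s₀) (hps₀ : ∀ c, p (s₀ c) = c)
    (hs₁ : Continuous s₁) (hps₁ : ∀ c, p (s₁ c) = c)
    (h : JoinedIn {x | IsTop (p x)} (s₀ m) (s₁ m)) :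
    ∃ F : B × I → X, Continuous F ∧ (∀ c, F (c, 0) = s₀ c) ∧ (∀ c, F (c, 1) = s₁ c) ∧
      ∀ c t, p (F (c, t)) = c := by
  lift s₀ to C(B, X) using hs₀
  lift s₁ to C(B, X) using hs₁
  have contract {s : C(B, X)} (hs : ∀ c, p (s c) = c) :
      s.HomotopicWith (.const B (s m)) (IsSupersection p) :=
    IsSupersection.homotopicWith_const κ hκ fun c ↦ (hs c).ge
  have super : s₀.HomotopicWith s₁ (IsSupersection p) :=
    ((contract hps₀).trans (homotopicWith_const_of_joinedIn_isTop h)).trans (contract hps₁).symm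
  obtain ⟨H⟩ := homotopicWith_leftInverse_of_isSupersection hφcont hφp hφid hps₀ hps₁ super
  exact ⟨fun q ↦ H (q.2, q.1), by fun_prop, H.apply_zero, H.apply_one, fun c t ↦ H.prop t c⟩

end Supersection

/-- The contraction `(t, c) ↦ c ⊔ ρ t` of a join-semilattice to its top element along a path `ρ`
from bottom to top. Joining with `ρ t` makes every point move upwards. -/
def supHomotopy {B : Type*} [TopologicalSpace B] [SemilatticeSup B] [ContinuousSup B]
    (ρ : C(I, B)) (hρ₀ : IsBot (ρ 0)) (hρ₁ : IsTop (ρ 1)) :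
    (ContinuousMap.id B).Homotopy (.const B (ρ 1)) where
  toFun q := q.2 ⊔ ρ q.1
  map_zero_left c := sup_of_le_left (hρ₀ c)
  map_one_left c := sup_of_le_right (hρ₁ c)

theorem continuous_ell {a b : ℝ} (hab : a ≤ b) : Continuous (ell a b hab) := by
  unfold ell
  fun_prop

theorem isBot_ell_zero {a b : ℝ} (hab : a ≤ b) : IsBot (ell a b hab 0) := fun c ↦ by
  simpa [ell, ← Subtype.coe_le_coe] using c.2.1

theorem isTop_ell_one {a b : ℝ} (hab : a ≤ b) : IsTop (ell a b hab 1) := fun c ↦ by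
  simpa [ell, ← Subtype.coe_le_coe] using c.2.2

/-- If `p : X → [a,b]` admits a continuous downward flow `φ` defined on
`D = {(x,c) : c ≤ p x}` with `p (φ (x,c)) = c` and `φ (x, p x) = x`, then any two sections
of `p` whose associated relative paths are homotopic through relative paths are homotopic
through sections. -/
theorem stmt4 {X : Type*} [TopologicalSpace X] (a b : ℝ) (hab : a < b)
    (p : X → Set.Icc a b) (hp : Continuous p)
    (φ : {q : X × Set.Icc a b // (q.2 : ℝ) ≤ (p q.1 : ℝ)} → X)
    (hφcont : Continuous φ)
    (hφp : ∀ q, p (φ q) = q.1.2)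
    (hφid : ∀ x : X, φ ⟨(x, p x), le_refl _⟩ = x) :
    ∀ s₀ s₁ : Set.Icc a b → X,
      Continuous s₀ → (∀ c, p (s₀ c) = c) →
      Continuous s₁ → (∀ c, p (s₁ c) = c) →
      (∃ G : I × I → X, Continuous G ∧
        (∀ u, G (u, 0) = s₀ (ell a b hab.le u)) ∧
        (∀ u, G (u, 1) = s₁ (ell a b hab.le u)) ∧
        (∀ t, (p (G (0, t)) : ℝ) = a) ∧
        (∀ t, (p (G (1, t)) : ℝ) = b)) →
      ∃ F : Set.Icc a b × I → X, Continuous F ∧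
        (∀ c, F (c, 0) = s₀ c) ∧
        (∀ c, F (c, 1) = s₁ c) ∧
        (∀ c t, p (F (c, t)) = c) := by
  rintro s₀ s₁ hs₀ hps₀ hs₁ hps₁ ⟨G, hG, hG₀, hG₁, -, hGb⟩
  exact stmt4_general
    (supHomotopy ⟨ell a b hab.le, continuous_ell hab.le⟩
      (isBot_ell_zero hab.le) (isTop_ell_one hab.le))
    (fun _ _ ↦ le_sup_left) hφcont hφp hφid hs₀ hps₀ hs₁ hps₁
    ⟨⟨⟨fun t ↦ G (1, t), by fun_prop⟩, hG₀ 1, hG₁ 1⟩, fun t c ↦ c.2.2.trans_eq (hGb t).symm⟩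
end

section
/- Let a < b be real numbers, Z a topological space, Y ⊆ Z × [a,b] a subspace with increasing fibers, and p : Y → [a,b] the restriction of the projection. Let s₀, s₁ be sections of p, and suppose there is a continuous path k : [0,1] → Y with k(0) = s₀(a), k(1) = s₁(a), and p(k(t)) = a for all t (a path from s₀(a) to s₁(a) inside the fiber over a). Then s₀ and s₁ are homotopic through sections. -/
open Set

/-!
Call a map `g : T → Y` a lax section if `p (g c) ≤ c` for all `c`. Moving the second coordinate of
`g c` up to `c`, which increasing fibers allow, turns lax sections into sections and fixes those
that already are sections, so two sections are homotopic through sections as soon as they are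
homotopic through lax sections. The latter is easy: precomposing a section `s` with a contraction
of `T` onto its least element `c₀` through maps below the identity deforms `s` to the constant map
`s c₀`, and constant maps with values over `c₀` move along paths in that fiber.
-/

section DownwardContraction

variable {T : Type*} [TopologicalSpace T]

/-- The space `T` contracts down to `c₀` if it can be deformed onto `c₀` in such a way that each
point stays below its initial position. -/
def ContractsDownTo [Preorder T] (c₀ : T) : Prop :=
  (ContinuousMap.id T).HomotopicWith (.const T c₀) fun f ↦ ∀ c, f c ≤ c

theorem ContractsDownTo.isBot [Preorder T] {c₀ : T} (hT : ContractsDownTo c₀) : IsBot c₀ := by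
  obtain ⟨D⟩ := hT
  exact fun c ↦ (D.apply_one c).symm.trans_le (D.prop 1 c)

theorem contractsDownTo_of_joined [SemilatticeInf T] [ContinuousInf T] {x y : T} (h : Joined x y)
    (hx : IsTop x) (hy : IsBot y) : ContractsDownTo y := by
  obtain ⟨γ⟩ := h
  exact ⟨{
    toFun p := γ p.1 ⊓ p.2
    map_zero_left c := (congrArg (· ⊓ c) γ.source).trans (inf_eq_right.mpr (hx c))
    map_one_left c := (congrArg (· ⊓ c) γ.target).trans (inf_eq_left.mpr (hy c))
    prop' _ _ := inf_le_right }⟩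

theorem contractsDownTo_Icc_left {a b : ℝ} (hab : a ≤ b) :
    ContractsDownTo (⟨a, left_mem_Icc.mpr hab⟩ : Icc a b) :=
  have hjoined : JoinedIn (Icc a b) b a :=
    ((convex_Icc a b).isPathConnected (nonempty_Icc.mpr hab)).joinedIn
      b (right_mem_Icc.mpr hab) a (left_mem_Icc.mpr hab)
  contractsDownTo_of_joined hjoined.joined_subtype (fun c ↦ c.2.2) (fun c ↦ c.2.1)

end DownwardContraction

section Sections

variable {Z T : Type*}

/-- A subset `Y ⊆ Z × T` has increasing fibers if `(z, c) ∈ Y` and `c ≤ c'` imply `(z, c') ∈ Y`;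
it is regarded as the total space of the projection to `T`. -/
def HasIncreasingFibers [Preorder T] (Y : Set (Z × T)) : Prop :=
  ∀ (z : Z) (c c' : T), (z, c) ∈ Y → c ≤ c' → (z, c') ∈ Y

variable [TopologicalSpace Z] [TopologicalSpace T] {Y : Set (Z × T)}

/-- A continuous map `s : T → Y` is a section if it is right inverse to the projection `Y → T`. -/
def IsSection (s : C(T, Y)) : Prop :=
  ∀ c, (s c).1.2 = c

variable [Preorder T]

/-- A continuous map `g : T → Y` is a lax section if the projection sends each `g c` below `c`.
Unlike sections, lax sections may be constant, which leaves room to deform them. -/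
def IsLaxSection (g : C(T, Y)) : Prop :=
  ∀ c, (g c).1.2 ≤ c

theorem HasIncreasingFibers.homotopicWith_isSection (hY : HasIncreasingFibers Y) {s₀ s₁ : C(T, Y)}
    (hs₀ : IsSection s₀) (hs₁ : IsSection s₁) (h : s₀.HomotopicWith s₁ IsLaxSection) :
    s₀.HomotopicWith s₁ IsSection := by
  obtain ⟨H⟩ := h
  have hfst₀ (c : T) : (H (0, c)).1.1 = (s₀ c).1.1 := by rw [H.apply_zero]
  have hfst₁ (c : T) : (H (1, c)).1.1 = (s₁ c).1.1 := by rw [H.apply_one]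
  exact ⟨{
    toFun x := ⟨((H x).1.1, x.2), hY _ _ _ (H x).2 (H.prop x.1 x.2)⟩
    map_zero_left c := Subtype.ext (Prod.ext (hfst₀ c) (hs₀ c).symm)
    map_one_left c := Subtype.ext (Prod.ext (hfst₁ c) (hs₁ c).symm)
    prop' _ _ := rfl }⟩

theorem IsSection.homotopicWith_const {s : C(T, Y)} (hs : IsSection s) {c₀ : T}
    (hT : ContractsDownTo c₀) : s.HomotopicWith (.const T (s c₀)) IsLaxSection := by
  obtain ⟨D⟩ := hT
  exact ⟨{
    toFun x := s (D x)
    map_zero_left c := congrArg s (D.apply_zero c)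
    map_one_left c := congrArg s (D.apply_one c)
    prop' t c := (hs (D (t, c))).trans_le (D.prop t c) }⟩

theorem homotopicWith_const_of_joinedIn {c₀ : T} (hc₀ : IsBot c₀) {y₀ y₁ : Y}
    (h : JoinedIn {y : Y | y.1.2 = c₀} y₀ y₁) :
    (ContinuousMap.const T y₀).HomotopicWith (.const T y₁) IsLaxSection := by
  obtain ⟨γ, hγ⟩ := h
  exact ⟨{
    toFun x := γ x.1
    map_zero_left _ := γ.source
    map_one_left _ := γ.target
    prop' t c := (hγ t).trans_le (hc₀ c) }⟩

theorem stmt6_general {c₀ : T} (hT : ContractsDownTo c₀) (hY : HasIncreasingFibers Y)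
    {s₀ s₁ : C(T, Y)} (hs₀ : IsSection s₀) (hs₁ : IsSection s₁)
    (h : JoinedIn {y : Y | y.1.2 = c₀} (s₀ c₀) (s₁ c₀)) :
    s₀.HomotopicWith s₁ IsSection := by
  have hconst : (ContinuousMap.const T (s₀ c₀)).HomotopicWith (.const T (s₁ c₀)) IsLaxSection :=
    homotopicWith_const_of_joinedIn hT.isBot h
  exact hY.homotopicWith_isSection hs₀ hs₁ <|
    ((hs₀.homotopicWith_const hT).trans hconst).trans (hs₁.homotopicWith_const hT).symm

end Sections

/-- For a subspace `Y ⊆ Z × [a,b]` with increasing fibers and `p : Y → [a,b]` the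
projection, two sections of `p` whose values at `a` are joined by a path inside the fiber
over `a` are homotopic through sections. -/
theorem stmt6 {Z : Type*} [TopologicalSpace Z] (a b : ℝ) (hab : a < b)
    (Y : Set (Z × Set.Icc a b))
    (hY : ∀ (z : Z) (c c' : Set.Icc a b), (z, c) ∈ Y → c ≤ c' → (z, c') ∈ Y)
    (s₀ s₁ : Set.Icc a b → Y)
    (hs₀ : Continuous s₀) (hs₀sec : ∀ c, (s₀ c).1.2 = c)
    (hs₁ : Continuous s₁) (hs₁sec : ∀ c, (s₁ c).1.2 = c)
    (k : unitInterval → Y) (hk : Continuous k)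
    (hk0 : k 0 = s₀ ⟨a, Set.left_mem_Icc.mpr hab.le⟩)
    (hk1 : k 1 = s₁ ⟨a, Set.left_mem_Icc.mpr hab.le⟩)
    (hka : ∀ t, ((k t).1.2 : ℝ) = a) :
    ∃ F : Set.Icc a b × unitInterval → Y, Continuous F ∧
      (∀ c, F (c, 0) = s₀ c) ∧
      (∀ c, F (c, 1) = s₁ c) ∧
      (∀ c t, (F (c, t)).1.2 = c) := by
  obtain ⟨H⟩ := stmt6_general (contractsDownTo_Icc_left hab.le) hY (s₀ := ⟨s₀, hs₀⟩)
    (s₁ := ⟨s₁, hs₁⟩) hs₀sec hs₁sec ⟨⟨⟨k, hk⟩, hk0, hk1⟩, fun t ↦ Subtype.ext (hka t)⟩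
  exact ⟨fun x ↦ H (x.2, x.1), by fun_prop, H.apply_zero, H.apply_one, fun c t ↦ H.prop t c⟩
end

section
/- Let a < b be real numbers, Z a topological space, Y ⊆ Z × [a,b] a subspace with decreasing fibers (i.e., (z,c) ∈ Y and a ≤ c' ≤ c imply (z,c') ∈ Y), and p : Y → [a,b] the restriction of the projection. Let γ be a relative path and write γ(1) = (z₁, b). Then the map s : [a,b] → Y defined by s(c) = (z₁, c) is a well-defined continuous section of p, and γ is homotopic through relative paths to s ∘ ℓ. -/
open Set unitInterval

/-!
Two moves deform `γ = (z, h)` into `(z 1, ℓ)`, each keeping the endpoints over `⊥` and `⊤`.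
First lower the heights from `h` to `h ⊓ ℓ` along `h u ⊓ ℓ (max t u)`, with `t` running from `1`
to `0`; the value at `u = 0` stays `⊥` because `h 0 = ⊥`. Then slide the first coordinate to `z 1`
along `(z (max t u), h (max t u) ⊓ ℓ u)`; now the value at `u = 0` stays over `⊥` because
`ℓ 0 = ⊥`. Decreasing fibers keep both moves inside `Y`.
-/

section DecreasingFibers

variable {X Z L : Type*} [TopologicalSpace X] [TopologicalSpace Z] [TopologicalSpace L]
  {Y : Set (Z × L)}

/-- A relative path in `Y ⊆ Z × L`: one that starts over `⊥` and ends over `⊤`. -/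
def IsRelativePath [Bot L] [Top L] (γ : C(I, Y)) : Prop :=
  (γ 0).1.2 = ⊥ ∧ (γ 1).1.2 = ⊤

variable [SemilatticeInf L] [ContinuousInf L]

/-- The map `x ↦ (z x, h x ⊓ g x)`, for `f = (z, h)` a map into a subspace `Y` with decreasing
fibers: the heights of `f` are cut down to at most `g`. -/
def capHeight (hY : ∀ z, IsLowerSet (Prod.mk z ⁻¹' Y))
    (f : C(X, Y)) (g : C(X, L)) : C(X, Y) where
  toFun x := ⟨((f x).1.1, (f x).1.2 ⊓ g x), hY _ inf_le_left (f x).2⟩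
  continuous_toFun := by fun_prop

variable [BoundedOrder L]

theorem homotopicWith_capHeight_self (hY : ∀ z, IsLowerSet (Prod.mk z ⁻¹' Y))
    {γ : C(I, Y)} (hγ : IsRelativePath γ) {ℓ : C(I, L)} (hℓ : ℓ 1 = ⊤) :
    (capHeight hY γ ℓ).HomotopicWith γ IsRelativePath :=
  ⟨{ toContinuousMap := capHeight hY (γ.comp .snd) (ℓ.comp ⟨fun x => max x.1 x.2, by fun_prop⟩)
     map_zero_left := fun u => by simp [capHeight]
     map_one_left := fun u => by simp [capHeight, max_eq_left (le_one' (t := u)), hℓ]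
     prop' := fun t => by
       simp [IsRelativePath, capHeight, max_eq_right (le_one' (t := t)), hγ.1, hγ.2, hℓ] }⟩

theorem homotopicWith_capHeight_const (hY : ∀ z, IsLowerSet (Prod.mk z ⁻¹' Y))
    {γ : C(I, Y)} (hγ : (γ 1).1.2 = ⊤) (ℓ : Path (⊥ : L) ⊤) :
    (capHeight hY γ ℓ).HomotopicWith (capHeight hY (.const I (γ 1)) ℓ) IsRelativePath :=
  ⟨{ toContinuousMap := capHeight hY (γ.comp ⟨fun x => max x.1 x.2, by fun_prop⟩)
       (ℓ.toContinuousMap.comp .snd)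
     map_zero_left := fun u => by simp [capHeight]
     map_one_left := fun u => by simp [capHeight, max_eq_left (le_one' (t := u))]
     prop' := fun t => by simp [IsRelativePath, capHeight, max_eq_right (le_one' (t := t)), hγ] }⟩

theorem stmt8_general (hY : ∀ z, IsLowerSet (Prod.mk z ⁻¹' Y)) {γ : C(I, Y)}
    (hγ : IsRelativePath γ) (ℓ : Path (⊥ : L) ⊤) :
    ∃ s : C(L, Y), (∀ c, (s c).1 = ((γ 1).1.1, c)) ∧
      γ.HomotopicWith (s.comp ℓ) IsRelativePath := by
  refine ⟨capHeight hY (.const L (γ 1)) (.id L), fun c => ?_, ?_⟩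
  · simp [capHeight, hγ.2]
  · exact (homotopicWith_capHeight_self hY hγ ℓ.target).symm.trans
      (homotopicWith_capHeight_const hY hγ.2 ℓ)

end DecreasingFibers

/-- The affine homeomorphism `ell`, as a path from the bottom to the top of `[a,b]`. -/
noncomputable def ellPath (a b : ℝ) [hab : Fact (a ≤ b)] : Path (⊥ : Set.Icc a b) ⊤ where
  toFun := ell a b hab.out
  continuous_toFun := by unfold ell; fun_prop
  source' := Subtype.ext (by simp [ell])
  target' := Subtype.ext (by simp [ell])

/-- For a subspace `Y ⊆ Z × [a,b]` with decreasing fibers and `p : Y → [a,b]` the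
projection, every relative path `γ` with `γ 1 = (z₁, b)` gives rise to the constant
section `s c = (z₁, c)`, which is well defined and continuous, and `γ` is homotopic
through relative paths to `s ∘ ℓ`. -/
theorem stmt8 {Z : Type*} [TopologicalSpace Z] (a b : ℝ) (hab : a < b)
    (Y : Set (Z × Set.Icc a b))
    (hY : ∀ (z : Z) (c c' : Set.Icc a b), (z, c) ∈ Y → c' ≤ c → (z, c') ∈ Y)
    (γ : I → Y) (hγ : Continuous γ)
    (hγ0 : ((γ 0).1.2 : ℝ) = a) (hγ1 : ((γ 1).1.2 : ℝ) = b) :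
    ∃ s : Set.Icc a b → Y, Continuous s ∧
      (∀ c, (s c).1 = ((γ 1).1.1, c)) ∧
      (∀ c, (s c).1.2 = c) ∧
      ∃ H : I × I → Y, Continuous H ∧
        (∀ u, H (u, 0) = γ u) ∧
        (∀ u, H (u, 1) = s (ell a b hab.le u)) ∧
        (∀ t, ((H (0, t)).1.2 : ℝ) = a) ∧
        (∀ t, ((H (1, t)).1.2 : ℝ) = b) := by
  have : Fact (a ≤ b) := ⟨hab.le⟩
  obtain ⟨s, hs, ⟨H⟩⟩ := stmt8_general (γ := ⟨γ, hγ⟩) (fun z c c' hle hc => hY z c c' hc hle)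
    ⟨Subtype.ext hγ0, Subtype.ext hγ1⟩ (ellPath a b)
  exact ⟨s, s.continuous, hs, fun c => congrArg Prod.snd (hs c), H ∘ Prod.swap,
    H.continuous.comp continuous_swap, H.apply_zero, H.apply_one,
    fun t => congrArg Subtype.val (H.prop t).1, fun t => congrArg Subtype.val (H.prop t).2⟩
end
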